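/- arXiv:2006.01498 — 2 statements merged into one kernel-verified Lean document; each statement's English description precedes it below -/
import Mathlib

section
/- Cyclic curvature identity involving the time direction (third identity of Lemma 4.3, frame form): assume K_ij = K_ji and Γ_ijb = −Γ_ibj identically on ℝ⁴, and that (E-Γ) holds at every point of ℝ⁴. Then for all b, i, j ∈ {1,2,3}: ( ∂_t Γ_bij + Σ_c K_bc Γ_cij ) − ( ∂_t Γ_ibj + Σ_c K_ic Γ_cbj ) + D̃_b K_ij − D̃_i K_bj = −δ_ij R̂_b0 + δ_bj R̂_i0 at every point of ℝ⁴. -/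
/-!
In covariant form, (E-Γ) says that `e_0 Γ_ijb + K_ic Γ_cjb` equals
`D̃_j K_bi - D̃_b K_ji + δ_ib R̂_j0 - δ_ij R̂_b0`. Subtracting this at the indices `(i, b, j)` from
the same at `(b, i, j)`, the symmetry of `D̃ K` in its last two slots cancels the derivatives
`D̃_j K_ib` against each other and the remaining ones against `D̃_b K_ij - D̃_i K_bj`; the terms
`δ_bi R̂_j0` cancel as well, leaving the right-hand side of the identity.
-/

open scoped BigOperators

noncomputable section

/-- Points of `ℝ⁴ = ℝ_t × ℝ³`; coordinate `0` is time. -/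
abbrev Pt : Type := Fin 4 → ℝ

/-- Coordinate partial derivative `∂_μ u`. -/
def pd (μ : Fin 4) (u : Pt → ℝ) (p : Pt) : ℝ := fderiv ℝ u p (Pi.single μ 1)

/-- Frame derivative `e_i u = Σ_j f_i^j ∂_j u` along the spatial frame `f`. -/
def fr (f : Fin 3 → Fin 3 → Pt → ℝ) (i : Fin 3) (u : Pt → ℝ) (p : Pt) : ℝ :=
  ∑ j : Fin 3, f i j p * pd j.succ u p

/-- `tr K = Σ_c K_cc`. -/
def trK (K : Fin 3 → Fin 3 → Pt → ℝ) (p : Pt) : ℝ := ∑ c : Fin 3, K c c p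

/-- `|K|² = Σ_{i,j} (K_ij)²`. -/
def nK2 (K : Fin 3 → Fin 3 → Pt → ℝ) (p : Pt) : ℝ :=
  ∑ i : Fin 3, ∑ j : Fin 3, (K i j p) ^ 2

/-- `|Γ|² = Σ_{i,j,b} (Γ_ijb)²`. -/
def nG2 (G : Fin 3 → Fin 3 → Fin 3 → Pt → ℝ) (p : Pt) : ℝ :=
  ∑ i : Fin 3, ∑ j : Fin 3, ∑ b : Fin 3, (G i j b p) ^ 2

/-- Kronecker delta. -/
def kd (i j : Fin 3) : ℝ := if i = j then 1 else 0

/-- The modified evolution equation (E-K) for `K_ij` at the point `p`. -/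
def EK (f K : Fin 3 → Fin 3 → Pt → ℝ) (G : Fin 3 → Fin 3 → Fin 3 → Pt → ℝ)
    (i j : Fin 3) (p : Pt) : Prop :=
  pd 0 (K i j) p + trK K p * K i j p =
    (1 / 2) * ( fr f i (fun q => ∑ b : Fin 3, G b j b q) p
      - (∑ b : Fin 3, fr f b (G i j b) p)
      + (∑ b : Fin 3, ∑ c : Fin 3, G b i c p * G c j b p)
      + (∑ b : Fin 3, ∑ c : Fin 3, G b b c p * G i j c p)
      + fr f j (fun q => ∑ b : Fin 3, G b i b q) p
      - (∑ b : Fin 3, fr f b (G j i b) p)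
      + (∑ b : Fin 3, ∑ c : Fin 3, G b j c p * G c i b p)
      + (∑ b : Fin 3, ∑ c : Fin 3, G b b c p * G j i c p) )
    - (1 / 2) * kd i j *
      ( 2 * (∑ a : Fin 3, fr f a (fun q => ∑ b : Fin 3, G b a b q) p)
      + (∑ b : Fin 3, ∑ a : Fin 3, ∑ c : Fin 3, G b a c p * G c a b p)
      + (∑ c : Fin 3, (∑ b : Fin 3, G b b c p) * (∑ a : Fin 3, G a a c p))
      + nK2 K p - (trK K p) ^ 2 )

/-- The unmodified evolution equation (E-K₀) for `K_ij` at the point `p`. -/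
def EK0 (f K : Fin 3 → Fin 3 → Pt → ℝ) (G : Fin 3 → Fin 3 → Fin 3 → Pt → ℝ)
    (i j : Fin 3) (p : Pt) : Prop :=
  pd 0 (K i j) p + trK K p * K i j p =
    (1 / 2) * ( fr f i (fun q => ∑ b : Fin 3, G b j b q) p
      - (∑ b : Fin 3, fr f b (G i j b) p)
      + (∑ b : Fin 3, ∑ c : Fin 3, G b i c p * G c j b p)
      + (∑ b : Fin 3, ∑ c : Fin 3, G b b c p * G i j c p)
      + fr f j (fun q => ∑ b : Fin 3, G b i b q) p
      - (∑ b : Fin 3, fr f b (G j i b) p)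
      + (∑ b : Fin 3, ∑ c : Fin 3, G b j c p * G c i b p)
      + (∑ b : Fin 3, ∑ c : Fin 3, G b b c p * G j i c p) )

/-- The modified evolution equation (E-Γ) for `Γ_ijb` at the point `p`. -/
def EG (f K : Fin 3 → Fin 3 → Pt → ℝ) (G : Fin 3 → Fin 3 → Fin 3 → Pt → ℝ)
    (i j b : Fin 3) (p : Pt) : Prop :=
  pd 0 (G i j b) p + (∑ c : Fin 3, K i c p * G c j b p) =
    fr f j (K b i) p - fr f b (K j i) p
    - (∑ c : Fin 3, G j b c p * K c i p) - (∑ c : Fin 3, G j i c p * K b c p)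
    + (∑ c : Fin 3, G b j c p * K c i p) + (∑ c : Fin 3, G b i c p * K j c p)
    + kd i b * ( (∑ c : Fin 3, fr f c (K c j) p)
      - (∑ c : Fin 3, ∑ l : Fin 3, G c c l p * K l j p)
      - (∑ c : Fin 3, ∑ l : Fin 3, G c j l p * K c l p)
      - fr f j (trK K) p )
    - kd i j * ( (∑ c : Fin 3, fr f c (K c b) p)
      - (∑ c : Fin 3, ∑ l : Fin 3, G c c l p * K l b p)
      - (∑ c : Fin 3, ∑ l : Fin 3, G c b l p * K c l p)
      - fr f b (trK K) p )

/-- The unmodified evolution equation (E-Γ₀) for `Γ_ijb` at the point `p`. -/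
def EG0 (f K : Fin 3 → Fin 3 → Pt → ℝ) (G : Fin 3 → Fin 3 → Fin 3 → Pt → ℝ)
    (i j b : Fin 3) (p : Pt) : Prop :=
  pd 0 (G i j b) p + (∑ c : Fin 3, K i c p * G c j b p) =
    fr f j (K b i) p - fr f b (K j i) p
    - (∑ c : Fin 3, G j b c p * K c i p) - (∑ c : Fin 3, G j i c p * K b c p)
    + (∑ c : Fin 3, G b j c p * K c i p) + (∑ c : Fin 3, G b i c p * K j c p)

/-- The frame evolution equation (E-f) at every point. -/
def Ef (f K : Fin 3 → Fin 3 → Pt → ℝ) : Prop :=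
  ∀ (i j : Fin 3) (p : Pt), pd 0 (f i j) p + (∑ c : Fin 3, K i c p * f c j p) = 0

/-- The inverse frame evolution equation (E-f⁻¹) at every point. -/
def Efi (fi K : Fin 3 → Fin 3 → Pt → ℝ) : Prop :=
  ∀ (b j : Fin 3) (p : Pt), pd 0 (fi b j) p - (∑ c : Fin 3, K c b p * fi c j p) = 0

/-- Torsion components `C_ijb = Σ_l f^b_l (e_i f_j^l − e_j f_i^l) − Γ_ijb + Γ_jib`. -/
def Tor (f fi : Fin 3 → Fin 3 → Pt → ℝ) (G : Fin 3 → Fin 3 → Fin 3 → Pt → ℝ)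
    (i j b : Fin 3) (p : Pt) : ℝ :=
  (∑ l : Fin 3, fi b l p * (fr f i (f j l) p - fr f j (f i l) p)) - G i j b p + G j i b p

/-- Spatial covariant derivative `D̃_j K_bi = e_j K_bi − Σ_l Γ_jbl K_li − Σ_l Γ_jil K_bl`. -/
def DtK (f K : Fin 3 → Fin 3 → Pt → ℝ) (G : Fin 3 → Fin 3 → Fin 3 → Pt → ℝ)
    (j b i : Fin 3) (p : Pt) : ℝ :=
  fr f j (K b i) p - (∑ l : Fin 3, G j b l p * K l i p) - (∑ l : Fin 3, G j i l p * K b l p)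

/-- `R̂_b0 = Σ_i D̃_i K_bi − e_b (tr K)`. -/
def Rb0 (f K : Fin 3 → Fin 3 → Pt → ℝ) (G : Fin 3 → Fin 3 → Fin 3 → Pt → ℝ)
    (b : Fin 3) (p : Pt) : ℝ :=
  (∑ i : Fin 3, DtK f K G i b i p) - fr f b (trK K) p

/-- Modified spatial curvature `R̂_aijb`. -/
def Rhat (f : Fin 3 → Fin 3 → Pt → ℝ) (G : Fin 3 → Fin 3 → Fin 3 → Pt → ℝ)
    (a i j b : Fin 3) (p : Pt) : ℝ :=
  fr f a (G i j b) p - fr f i (G a j b) p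
  - (∑ c : Fin 3, G a b c p * G i j c p)
  + (∑ c : Fin 3, G i b c p * G a j c p)
  - (∑ c : Fin 3, (G a i c p - G i a c p) * G c j b p)

/-- Modified spatial Ricci contraction `r̂_ij = Σ_b R̂_bijb`. -/
def rhat (f : Fin 3 → Fin 3 → Pt → ℝ) (G : Fin 3 → Fin 3 → Fin 3 → Pt → ℝ)
    (i j : Fin 3) (p : Pt) : ℝ :=
  ∑ b : Fin 3, Rhat f G b i j b p

/-- Spatial covariant derivative of the torsion, `D̃_j C_aib`. -/
def DtC (f fi : Fin 3 → Fin 3 → Pt → ℝ) (G : Fin 3 → Fin 3 → Fin 3 → Pt → ℝ)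
    (j a i b : Fin 3) (p : Pt) : ℝ :=
  fr f j (Tor f fi G a i b) p
  - (∑ l : Fin 3, G j a l p * Tor f fi G l i b p)
  - (∑ l : Fin 3, G j i l p * Tor f fi G a l b p)
  - (∑ l : Fin 3, G j b l p * Tor f fi G a i l p)

section CovariantForm

open scoped Topology

variable {f K : Fin 3 → Fin 3 → Pt → ℝ} {G : Fin 3 → Fin 3 → Fin 3 → Pt → ℝ} {p : Pt}

theorem kd_comm (i j : Fin 3) : kd i j = kd j i := by
  simp only [kd, eq_comm]

theorem fr_congr {u v : Pt → ℝ} (huv : u =ᶠ[𝓝 p] v) (i : Fin 3) :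
    fr f i u p = fr f i v p := by
  simp only [fr, pd, huv.fderiv_eq]

theorem dtK_swap (hK : ∀ i j, K i j =ᶠ[𝓝 p] K j i) (j b i : Fin 3) :
    DtK f K G j b i p = DtK f K G j i b p := by
  have hKp (a c : Fin 3) : K a c p = K c a p := (hK a c).eq_of_nhds
  simp only [DtK, fr_congr (hK b i), hKp _ i, hKp b]
  ring

theorem rb0_eq_sum_dtK_sub_fr_trK (hK : ∀ i j, K i j =ᶠ[𝓝 p] K j i) (b : Fin 3) :
    Rb0 f K G b p = (∑ c, DtK f K G c c b p) - fr f b (trK K) p := by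
  simp only [Rb0, dtK_swap hK _ b]

theorem eg_iff_dtK_rb0 (hK : ∀ i j, K i j =ᶠ[𝓝 p] K j i) (i j b : Fin 3) :
    EG f K G i j b p ↔
      pd 0 (G i j b) p + (∑ c, K i c p * G c j b p) =
        DtK f K G j b i p - DtK f K G b j i p
          + kd i b * Rb0 f K G j p - kd i j * Rb0 f K G b p := by
  simp only [EG, rb0_eq_sum_dtK_sub_fr_trK hK, DtK, Finset.sum_sub_distrib]
  ring_nf

theorem cyclic_identity_time_general (hK : ∀ i j, K i j =ᶠ[𝓝 p] K j i)
    (hEG : ∀ i j b, EG f K G i j b p) (b i j : Fin 3) :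
    (pd 0 (G b i j) p + (∑ c, K b c p * G c i j p))
        - (pd 0 (G i b j) p + (∑ c, K i c p * G c b j p))
        + DtK f K G b i j p - DtK f K G i b j p
      = - kd i j * Rb0 f K G b p + kd b j * Rb0 f K G i p := by
  have hG (i j b : Fin 3) := (eg_iff_dtK_rb0 hK i j b).mp (hEG i j b)
  rw [hG b i j, hG i b j, dtK_swap hK b j i, dtK_swap hK i j b, dtK_swap hK j b i, kd_comm b i]
  ring

end CovariantForm

/-- third identity of Lemma 4.3, frame form: cyclic curvature
identity involving the time direction. -/
theorem cyclic_identity_time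
    (f K : Fin 3 → Fin 3 → Pt → ℝ) (G : Fin 3 → Fin 3 → Fin 3 → Pt → ℝ)
    (hf : ∀ i j, ContDiff ℝ (⊤ : ℕ∞) (f i j))
    (hK : ∀ i j, ContDiff ℝ (⊤ : ℕ∞) (K i j)) (hG : ∀ i j b, ContDiff ℝ (⊤ : ℕ∞) (G i j b))
    (hKsym : ∀ (i j : Fin 3) (p : Pt), K i j p = K j i p)
    (hGanti : ∀ (i j b : Fin 3) (p : Pt), G i j b p = - G i b j p)
    (hEG : ∀ (i j b : Fin 3) (p : Pt), EG f K G i j b p) :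
    ∀ (b i j : Fin 3) (p : Pt),
      (pd 0 (G b i j) p + (∑ c : Fin 3, K b c p * G c i j p))
        - (pd 0 (G i b j) p + (∑ c : Fin 3, K i c p * G c b j p))
        + DtK f K G b i j p - DtK f K G i b j p
      = - kd i j * Rb0 f K G b p + kd b j * Rb0 f K G i p := by
  intro b i j p
  exact cyclic_identity_time_general
    (fun i j => .of_forall (hKsym i j)) (fun i j b => hEG i j b p) b i j
end
end

section
/- Homogeneous boundary conditions for the modified Ricci components (Lemma 4.5, frame form): let p ∈ ℝ⁴. Assume K_ij = K_ji and Γ_ijb = −Γ_ibj identically on ℝ⁴, and that (E-Γ) holds at p. Suppose that at p one has K_A3 = 0 and Γ_A3B = 0 for all A, B ∈ {1,2}, together with the tangential-derivative conditions e_0 K_A3 = 0, e_0 Γ_A3B = 0 and e_C Γ_A3B = 0 for all A, B, C ∈ {1,2}. Then at p: (a) R̂_30 = 0, i.e. Σ_i [ e_i K_3i − Σ_l Γ_i3l K_li − Σ_l Γ_iil K_3l ] − e_3 (tr K) = 0; and (b) e_0 K_B3 + (tr K) K_B3 + r̂_B3 = 0 for each B ∈ {1,2}. -/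
open scoped BigOperators

noncomputable section

/-! Writing `D̃` for the spatial covariant derivative, symmetry of `K` turns (E-Γ) into
`e_0 Γ_ijb + K_ic Γ_cjb = D̃_j K_bi - D̃_b K_ji + δ_ib R̂_j0 - δ_ij R̂_b0`.
In the trace over `i = b` the `K` terms contribute `-R̂_j0` and the delta terms `3 R̂_j0 - R̂_j0`,
so `R̂_j0 = Σ_i (e_0 Γ_iji + K_ic Γ_cji)`; for `j` normal to the boundary every summand vanishes.

In `r̂_Bn = Σ_b R̂_bBnb` the summand `b = n` is zero because `R̂` is antisymmetric in its last two
indices. The tangential ones are zero by the Codazzi equation, as `Γ_AnB` (up to sign, the second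
fundamental form of the boundary) vanishes together with its tangential derivatives. -/

section FrameDerivative

variable (f : Fin 3 → Fin 3 → Pt → ℝ) (i : Fin 3) {p : Pt}

theorem fr_zero : fr f i 0 p = 0 := by
  simp [fr, pd]

theorem fr_sum {ι : Type*} (s : Finset ι) {u : ι → Pt → ℝ}
    (hu : ∀ k ∈ s, DifferentiableAt ℝ (u k) p) :
    fr f i (fun q => ∑ k ∈ s, u k q) p = ∑ k ∈ s, fr f i (u k) p := by
  simp only [fr, pd, fderiv_fun_sum hu, sum_apply, Finset.mul_sum]
  exact Finset.sum_comm

theorem fr_trK {K : Fin 3 → Fin 3 → Pt → ℝ} (hK : ∀ c, DifferentiableAt ℝ (K c c) p) :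
    fr f i (trK K) p = ∑ c, fr f i (K c c) p :=
  fr_sum f i Finset.univ fun c _ => hK c

end FrameDerivative

section MomentumConstraint

variable {f K : Fin 3 → Fin 3 → Pt → ℝ} {G : Fin 3 → Fin 3 → Fin 3 → Pt → ℝ} {p : Pt}

theorem DtK_symm (hK : ∀ i j, K i j = K j i) (j b i : Fin 3) :
    DtK f K G j b i p = DtK f K G j i b p := by
  simp only [DtK, hK i, hK _ b, mul_comm]
  ring

theorem sum_DtK_self {j : Fin 3} (hK : ∀ c, DifferentiableAt ℝ (K c c) p)
    (hG : ∀ i b, G j i b p = -G j b i p) :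
    ∑ i, DtK f K G j i i p = fr f j (trK K) p := by
  have hcancel : ∑ i, ∑ l, G j i l p * K i l p = -∑ i, ∑ l, G j i l p * K l i p := by
    rw [Finset.sum_comm]
    simp only [← Finset.sum_neg_distrib, ← neg_mul, ← hG]
  simp only [DtK, Finset.sum_sub_distrib, hcancel, fr_trK f j hK]
  ring

theorem EG_iff_DtK (hK : ∀ i j, K i j = K j i) (i j b : Fin 3) :
    EG f K G i j b p ↔
      pd 0 (G i j b) p + ∑ c, K i c p * G c j b p =
        DtK f K G j b i p - DtK f K G b j i p
          + kd i b * Rb0 f K G j p - kd i j * Rb0 f K G b p := by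
  have hdiv (d : Fin 3) : Rb0 f K G d p =
      (∑ c, fr f c (K c d) p) - (∑ c, ∑ l, G c c l p * K l d p)
        - (∑ c, ∑ l, G c d l p * K c l p) - fr f d (trK K) p := by
    rw [Rb0, Finset.sum_congr rfl fun c _ => DtK_symm hK c d c]
    simp only [DtK, Finset.sum_sub_distrib]
  rw [EG, hdiv, hdiv, DtK, DtK]
  ring_nf

theorem Rb0_eq_sum_of_EG {j : Fin 3} (hdiff : ∀ c, DifferentiableAt ℝ (K c c) p)
    (hK : ∀ i j, K i j = K j i) (hG : ∀ i b, G j i b p = -G j b i p)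
    (hEG : ∀ i, EG f K G i j i p) :
    Rb0 f K G j p = ∑ i, (pd 0 (G i j i) p + ∑ c, K i c p * G c j i p) := by
  have hdiv : ∑ i, DtK f K G i j i p = Rb0 f K G j p + fr f j (trK K) p := by
    rw [Rb0, sub_add_cancel]
  have hdelta_trace : ∑ i, kd i i * Rb0 f K G j p = 3 * Rb0 f K G j p := by
    simp [kd]
  have hdelta_contract : ∑ i, kd i j * Rb0 f K G i p = Rb0 f K G j p := by
    simp [kd]
  calc Rb0 f K G j p
      = ∑ i, (DtK f K G j i i p - DtK f K G i j i p
          + kd i i * Rb0 f K G j p - kd i j * Rb0 f K G i p) := by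
        rw [Finset.sum_sub_distrib, Finset.sum_add_distrib, Finset.sum_sub_distrib,
          sum_DtK_self hdiff hG, hdiv, hdelta_trace, hdelta_contract]
        ring
    _ = ∑ i, (pd 0 (G i j i) p + ∑ c, K i c p * G c j i p) :=
        Finset.sum_congr rfl fun i _ => ((EG_iff_DtK hK i j i).1 (hEG i)).symm

end MomentumConstraint

theorem Rhat_self_right (f : Fin 3 → Fin 3 → Pt → ℝ) {G : Fin 3 → Fin 3 → Fin 3 → Pt → ℝ}
    {p : Pt} {j : Fin 3} (hG : ∀ c, G c j j = 0) (a i : Fin 3) :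
    Rhat f G a i j j p = 0 := by
  simp only [Rhat, hG, fr_zero, Pi.zero_apply, mul_comm (G i j _ p), mul_zero,
    Finset.sum_const_zero]
  ring

section Boundary

variable {f K : Fin 3 → Fin 3 → Pt → ℝ} {G : Fin 3 → Fin 3 → Fin 3 → Pt → ℝ} {p : Pt} {n : Fin 3}

theorem Rb0_normal_eq_zero (hdiff : ∀ c, DifferentiableAt ℝ (K c c) p)
    (hK : ∀ i j, K i j = K j i) (hG : ∀ i j b, G i j b = -G i b j)
    (hEG : ∀ i, EG f K G i n i p)
    (hbK : ∀ A ≠ n, K A n p = 0) (hbG : ∀ A ≠ n, ∀ B ≠ n, G A n B p = 0)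
    (htG0 : ∀ A ≠ n, pd 0 (G A n A) p = 0) :
    Rb0 f K G n p = 0 := by
  rw [Rb0_eq_sum_of_EG hdiff hK (fun i b => congrFun (hG n i b) p) hEG]
  refine Finset.sum_eq_zero fun i _ => ?_
  obtain rfl | hi := eq_or_ne i n
  · have hdiag (c : Fin 3) : G c i i = 0 := self_eq_neg.1 (hG c i i)
    simp [hdiag, pd]
  · have hquad (c : Fin 3) : K i c p * G c n i p = 0 := by
      obtain rfl | hc := eq_or_ne c n
      · rw [hbK i hi, zero_mul]
      · rw [hbG c hc i hi, mul_zero]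
    simp only [htG0 i hi, hquad, Finset.sum_const_zero, add_zero]

theorem Rhat_tangential_eq_zero (hG : ∀ i j b, G i j b p = -G i b j p)
    (hbG : ∀ A ≠ n, ∀ B ≠ n, G A n B p = 0)
    (htG : ∀ A ≠ n, ∀ B ≠ n, ∀ C ≠ n, fr f C (G A n B) p = 0)
    {A B C : Fin 3} (hA : A ≠ n) (hB : B ≠ n) (hC : C ≠ n) :
    Rhat f G A B n C p = 0 := by
  have hnormal {D : Fin 3} (hD : D ≠ n) (c : Fin 3) : G D n c p = 0 := by
    obtain rfl | hc := eq_or_ne c n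
    · exact self_eq_neg.1 (hG D c c)
    · exact hbG D hD c hc
  have htorsion (c : Fin 3) : (G A B c p - G B A c p) * G c n C p = 0 := by
    obtain rfl | hc := eq_or_ne c n
    · rw [hG A B, hG B A, hnormal hA, hnormal hB, sub_self, zero_mul]
    · rw [hnormal hc, mul_zero]
  simp only [Rhat, htG B hB C hC A hA, htG A hA C hC B hB, hnormal hA, hnormal hB, htorsion,
    mul_zero, Finset.sum_const_zero, sub_zero, add_zero]

theorem rhat_tangential_normal_eq_zero (hG : ∀ i j b, G i j b = -G i b j)
    (hbG : ∀ A ≠ n, ∀ B ≠ n, G A n B p = 0)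
    (htG : ∀ A ≠ n, ∀ B ≠ n, ∀ C ≠ n, fr f C (G A n B) p = 0) {B : Fin 3} (hB : B ≠ n) :
    rhat f G B n p = 0 := by
  refine Finset.sum_eq_zero fun b _ => ?_
  obtain rfl | hb := eq_or_ne b n
  · exact Rhat_self_right f (fun c => self_eq_neg.1 (hG c b b)) b B
  · exact Rhat_tangential_eq_zero (fun i j c => congrFun (hG i j c) p) hbG htG hb hB hb

end Boundary

theorem forall_ne_last_of_forall_castSucc {m : ℕ} {P : Fin (m + 1) → Prop}
    (h : ∀ A : Fin m, P A.castSucc) : ∀ A ≠ Fin.last m, P A := by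
  intro A hA
  obtain ⟨A, rfl⟩ := Fin.exists_castSucc_eq.2 hA
  exact h A

/-- Lemma 4.5, frame form: homogeneous boundary conditions for the
modified Ricci components. Indices `1,2` of `{1,2,3}` are `(0 : Fin 3)`,
`(1 : Fin 3)`; index `3` is `(2 : Fin 3)`; indices ranging over `{1,2}` are encoded
by `Fin 2` via `Fin.castSucc`. -/
theorem Ricci_boundary_conditions
    (f K : Fin 3 → Fin 3 → Pt → ℝ) (G : Fin 3 → Fin 3 → Fin 3 → Pt → ℝ)
    (hf : ∀ i j, ContDiff ℝ (⊤ : ℕ∞) (f i j))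
    (hK : ∀ i j, ContDiff ℝ (⊤ : ℕ∞) (K i j)) (hG : ∀ i j b, ContDiff ℝ (⊤ : ℕ∞) (G i j b))
    (p : Pt)
    (hKsym : ∀ (i j : Fin 3) (q : Pt), K i j q = K j i q)
    (hGanti : ∀ (i j b : Fin 3) (q : Pt), G i j b q = - G i b j q)
    (hEG : ∀ i j b : Fin 3, EG f K G i j b p)
    (hbK : ∀ A : Fin 2, K A.castSucc 2 p = 0)
    (hbG : ∀ A B : Fin 2, G A.castSucc 2 B.castSucc p = 0)
    (htK0 : ∀ A : Fin 2, pd 0 (K A.castSucc 2) p = 0)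
    (htG0 : ∀ A B : Fin 2, pd 0 (G A.castSucc 2 B.castSucc) p = 0)
    (htG : ∀ A B C : Fin 2, fr f C.castSucc (G A.castSucc 2 B.castSucc) p = 0) :
    ((∑ i : Fin 3, (fr f i (K 2 i) p
        - (∑ l : Fin 3, G i 2 l p * K l i p)
        - (∑ l : Fin 3, G i i l p * K 2 l p)))
      - fr f 2 (trK K) p = 0)
    ∧ (∀ B : Fin 2,
        pd 0 (K B.castSucc 2) p + trK K p * K B.castSucc 2 p
          + rhat f G B.castSucc 2 p = 0) := by
  have hK' (i j : Fin 3) : K i j = K j i := funext (hKsym i j)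
  have hG' (i j b : Fin 3) : G i j b = -G i b j := funext (hGanti i j b)
  have hdiff (c : Fin 3) : DifferentiableAt ℝ (K c c) p :=
    (hK c c).differentiable (by simp) p
  have hbK' : ∀ A ≠ 2, K A 2 p = 0 := forall_ne_last_of_forall_castSucc hbK
  have hbG' : ∀ A ≠ 2, ∀ B ≠ 2, G A 2 B p = 0 :=
    forall_ne_last_of_forall_castSucc fun A => forall_ne_last_of_forall_castSucc (hbG A)
  have htG0' : ∀ A ≠ 2, pd 0 (G A 2 A) p = 0 :=
    forall_ne_last_of_forall_castSucc fun A => htG0 A A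
  have htG' : ∀ A ≠ 2, ∀ B ≠ 2, ∀ C ≠ 2, fr f C (G A 2 B) p = 0 :=
    forall_ne_last_of_forall_castSucc fun A => forall_ne_last_of_forall_castSucc fun B =>
      forall_ne_last_of_forall_castSucc (htG A B)
  refine ⟨Rb0_normal_eq_zero hdiff hK' hG' (fun i => hEG i 2 i) hbK' hbG' htG0', fun B => ?_⟩
  have hrhat : rhat f G B.castSucc 2 p = 0 :=
    rhat_tangential_normal_eq_zero hG' hbG' htG' (Fin.castSucc_ne_last B)
  rw [htK0, hbK, hrhat, mul_zero, add_zero, add_zero]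
end
end
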